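/- Let x⋆ ∈ ℝ^n, r > 0, s ∈ [0, 1), and let T : ℝ^n → ℝ^n satisfy ‖T(x) − x⋆‖ ≤ s‖x − x⋆‖ for every x in the closed ball of radius r around x⋆. Let δ ≥ 0 with δ ≤ (1 − s)r, and let (p_k)_{k∈ℕ} be a sequence in ℝ^n with ‖p_k‖ ≤ δ for all k. Define x_{k+1} = T(x_k) + p_k with x_0 in the closed ball of radius r around x⋆. Then x_k remains in the closed ball of radius r around x⋆ for all k, and ‖x_k − x⋆‖ ≤ s^k‖x_0 − x⋆‖ + δ/(1 − s) for all k ∈ ℕ; in particular the iterates are uniformly ultimately bounded: for every ε > 0 there exists N ∈ ℕ such that ‖x_k − x⋆‖ ≤ δ/(1 − s) + ε for all k ≥ N, and the ultimate bound δ/(1 − s) is a strictly increasing function of δ vanishing at δ = 0. -/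

import Mathlib

/-!
On the ball, the triangle inequality gives `‖x (k+1) - x⋆‖ ≤ s * ‖x k - x⋆‖ + δ`. Since
`s * r + δ ≤ r`, the ball is invariant, so this scalar recursion holds for every `k`. Comparing it
with the fixed point `δ / (1 - s)` of `b ↦ s * b + δ` gives the geometric bound by induction, and
`s ^ k → 0` gives the ultimate bound.
-/

open Metric

/-- A locally contracting map perturbed by additive disturbances bounded by `δ`:
the iterates stay in the ball of radius `r` around `x⋆`, satisfy the bound
`‖x_k − x⋆‖ ≤ s^k ‖x_0 − x⋆‖ + δ/(1−s)`, and are uniformly ultimately bounded by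
`δ/(1−s)`, which is a strictly increasing function of `δ` vanishing at `0`. -/
theorem perturbed_contraction_ultimately_bounded {n : ℕ}
    (xstar : EuclideanSpace ℝ (Fin n)) (r s : ℝ) (hr : 0 < r)
    (hs0 : 0 ≤ s) (hs1 : s < 1)
    (T : EuclideanSpace ℝ (Fin n) → EuclideanSpace ℝ (Fin n))
    (hT : ∀ x ∈ closedBall xstar r, ‖T x - xstar‖ ≤ s * ‖x - xstar‖)
    (δ : ℝ) (hδ0 : 0 ≤ δ) (hδr : δ ≤ (1 - s) * r)
    (pert : ℕ → EuclideanSpace ℝ (Fin n)) (hpert : ∀ k, ‖pert k‖ ≤ δ)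
    (x : ℕ → EuclideanSpace ℝ (Fin n))
    (hx0 : x 0 ∈ closedBall xstar r)
    (hrec : ∀ k, x (k + 1) = T (x k) + pert k) :
    (∀ k, x k ∈ closedBall xstar r) ∧
      (∀ k, ‖x k - xstar‖ ≤ s ^ k * ‖x 0 - xstar‖ + δ / (1 - s)) ∧
      (∀ ε > (0 : ℝ), ∃ N : ℕ, ∀ k ≥ N, ‖x k - xstar‖ ≤ δ / (1 - s) + ε) ∧
      StrictMono (fun d : ℝ => d / (1 - s)) ∧ (0 : ℝ) / (1 - s) = 0 := by
  have hs : 0 < 1 - s := by linarith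
  have step : ∀ k, x k ∈ closedBall xstar r →
      ‖x (k + 1) - xstar‖ ≤ s * ‖x k - xstar‖ + δ := by
    intro k hk
    calc ‖x (k + 1) - xstar‖ = ‖(T (x k) - xstar) + pert k‖ := by
          rw [hrec k]; congr 1; abel
      _ ≤ ‖T (x k) - xstar‖ + ‖pert k‖ := norm_add_le _ _
      _ ≤ s * ‖x k - xstar‖ + δ := add_le_add (hT _ hk) (hpert k)
  have inv : ∀ k, x k ∈ closedBall xstar r := by
    intro k
    induction k with
    | zero => exact hx0
    | succ k ih =>
      have h1 := step k ih
      rw [mem_closedBall_iff_norm] at ih ⊢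
      have h2 := mul_le_mul_of_nonneg_left ih hs0
      -- `s * r + (1 - s) * r = r`
      linarith
  have bound : ∀ k, ‖x k - xstar‖ ≤ s ^ k * ‖x 0 - xstar‖ + δ / (1 - s) := by
    intro k
    induction k with
    | zero =>
      have : 0 ≤ δ / (1 - s) := by positivity
      simpa using this
    | succ k ih =>
      have h2 := mul_le_mul_of_nonneg_left ih hs0
      -- `δ / (1 - s)` is the fixed point of `b ↦ s * b + δ`.
      have h3 : s * (δ / (1 - s)) + δ = δ / (1 - s) := by
        field_simp
        ring
      calc ‖x (k + 1) - xstar‖ ≤ s * ‖x k - xstar‖ + δ := step k (inv k)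
        _ ≤ s * (s ^ k * ‖x 0 - xstar‖ + δ / (1 - s)) + δ := by linarith
        _ = s ^ (k + 1) * ‖x 0 - xstar‖ + (s * (δ / (1 - s)) + δ) := by ring
        _ = s ^ (k + 1) * ‖x 0 - xstar‖ + δ / (1 - s) := by rw [h3]
  refine ⟨inv, bound, ?_, ?_, zero_div _⟩
  · intro ε hε
    have ht : Filter.Tendsto (fun k : ℕ => s ^ k * ‖x 0 - xstar‖) Filter.atTop (nhds 0) := by
      simpa using (tendsto_pow_atTop_nhds_zero_of_lt_one hs0 hs1).mul_const ‖x 0 - xstar‖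
    obtain ⟨N, hN⟩ := Filter.eventually_atTop.1 (ht.eventually_le_const hε)
    exact ⟨N, fun k hk => by linarith [bound k, hN k hk]⟩
  · exact fun a b hab => div_lt_div_of_pos_right hab hs
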